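/- arXiv:1010.3010 — 3 statements merged into one kernel-verified Lean document; each statement's English description precedes it below -/
import Mathlib

section
/- Let K : ℝ → ℝ be a smooth function and let ψ : ℝ³ → ℝ be a smooth solution of the rotationally invariant parameterized vorticity equation ζ_t + ψ_x ζ_y − ψ_y ζ_x = K(x² + y²)·(ζ_xx + ζ_yy), where ζ := ψ_xx + ψ_yy. Then for every ε ∈ ℝ the function ψ̃(t,x,y) := ψ(t, x cos(εt) + y sin(εt), −x sin(εt) + y cos(εt)) + (ε/2)(x² + y²) is also a smooth solution of the same equation. -/
noncomputable section

/-- Partial derivative with respect to t. -/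
def dT (f : ℝ × ℝ × ℝ → ℝ) (p : ℝ × ℝ × ℝ) : ℝ := fderiv ℝ f p (1, 0, 0)
/-- Partial derivative with respect to x. -/
def dX (f : ℝ × ℝ × ℝ → ℝ) (p : ℝ × ℝ × ℝ) : ℝ := fderiv ℝ f p (0, 1, 0)
/-- Partial derivative with respect to y. -/
def dY (f : ℝ × ℝ × ℝ → ℝ) (p : ℝ × ℝ × ℝ) : ℝ := fderiv ℝ f p (0, 0, 1)

/-- The vorticity ζ := ψ_xx + ψ_yy. -/
def vort (ψ : ℝ × ℝ × ℝ → ℝ) : ℝ × ℝ × ℝ → ℝ := fun p => dX (dX ψ) p + dY (dY ψ) p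

/-- ψ is a smooth solution of the rotationally invariant parameterized vorticity
equation ζ_t + ψ_x ζ_y − ψ_y ζ_x = K(x² + y²)·(ζ_xx + ζ_yy). -/
def IsKVortSol (K : ℝ → ℝ) (ψ : ℝ × ℝ × ℝ → ℝ) : Prop :=
  ContDiff ℝ (⊤ : ℕ∞) ψ ∧ ∀ p : ℝ × ℝ × ℝ,
    dT (vort ψ) p + dX ψ p * dY (vort ψ) p - dY ψ p * dX (vort ψ) p
      = K (p.2.1 ^ 2 + p.2.2 ^ 2) * (dX (dX (vort ψ)) p + dY (dY (vort ψ)) p)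

/-- The rotating change of variables. -/
def rotR (ε : ℝ) (p : ℝ × ℝ × ℝ) : ℝ × ℝ × ℝ :=
  (p.1, p.2.1 * Real.cos (ε * p.1) + p.2.2 * Real.sin (ε * p.1),
         -p.2.1 * Real.sin (ε * p.1) + p.2.2 * Real.cos (ε * p.1))

lemma rotR_contDiff (ε : ℝ) : ContDiff ℝ (⊤ : ℕ∞) (rotR ε) := by
  unfold rotR; fun_prop

lemma fderiv_split (f : ℝ × ℝ × ℝ → ℝ) (q : ℝ × ℝ × ℝ) (a b c : ℝ) :
    fderiv ℝ f q (a, b, c) = a * dT f q + b * dX f q + c * dY f q := by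
  have : ((a, b, c) : ℝ × ℝ × ℝ) = a • ((1, 0, 0) : ℝ × ℝ × ℝ) + b • ((0, 1, 0) : ℝ × ℝ × ℝ)
      + c • ((0, 0, 1) : ℝ × ℝ × ℝ) := by simp
  rw [this, map_add, map_add, map_smul, map_smul, map_smul]
  simp [dT, dX, dY]

lemma dir_contDiff {f : ℝ × ℝ × ℝ → ℝ} (hf : ContDiff ℝ (⊤ : ℕ∞) f) (v : ℝ × ℝ × ℝ) :
    ContDiff ℝ (⊤ : ℕ∞) (fun p => fderiv ℝ f p v) :=
  (hf.fderiv_right (m := (⊤ : ℕ∞)) (by simp)).clm_apply contDiff_const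

lemma dX_contDiff {f : ℝ × ℝ × ℝ → ℝ} (hf : ContDiff ℝ (⊤ : ℕ∞) f) :
    ContDiff ℝ (⊤ : ℕ∞) (dX f) := dir_contDiff hf _
lemma dY_contDiff {f : ℝ × ℝ × ℝ → ℝ} (hf : ContDiff ℝ (⊤ : ℕ∞) f) :
    ContDiff ℝ (⊤ : ℕ∞) (dY f) := dir_contDiff hf _
lemma vort_contDiff {f : ℝ × ℝ × ℝ → ℝ} (hf : ContDiff ℝ (⊤ : ℕ∞) f) :
    ContDiff ℝ (⊤ : ℕ∞) (vort f) :=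
  (dX_contDiff (dX_contDiff hf)).add (dY_contDiff (dY_contDiff hf))

lemma smooth_diff {f : ℝ × ℝ × ℝ → ℝ} (hf : ContDiff ℝ (⊤ : ℕ∞) f) : Differentiable ℝ f :=
  hf.differentiable (by simp)

lemma curve_deriv {f : ℝ × ℝ × ℝ → ℝ} (hf : Differentiable ℝ f) {u v w : ℝ → ℝ} {a b c s : ℝ}
    (hu : HasDerivAt u a s) (hv : HasDerivAt v b s) (hw : HasDerivAt w c s) :
    HasDerivAt (fun z => f (u z, v z, w z))
      (a * dT f (u s, v s, w s) + b * dX f (u s, v s, w s) + c * dY f (u s, v s, w s)) s := by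
  rw [← fderiv_split]
  exact (hf (u s, v s, w s)).hasFDerivAt.comp_hasDerivAt s (hu.prodMk (hv.prodMk hw))

lemma dT_eq {f : ℝ × ℝ × ℝ → ℝ} (hf : Differentiable ℝ f) {t x y d : ℝ}
    (h : HasDerivAt (fun z => f (z, x, y)) d t) : dT f (t, x, y) = d := by
  have := curve_deriv hf (hasDerivAt_id' t) (hasDerivAt_const t x) (hasDerivAt_const t y)
  simpa using this.unique h
lemma dX_eq {f : ℝ × ℝ × ℝ → ℝ} (hf : Differentiable ℝ f) {t x y d : ℝ}
    (h : HasDerivAt (fun z => f (t, z, y)) d x) : dX f (t, x, y) = d := by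
  have := curve_deriv hf (hasDerivAt_const x t) (hasDerivAt_id' x) (hasDerivAt_const x y)
  simpa using this.unique h
lemma dY_eq {f : ℝ × ℝ × ℝ → ℝ} (hf : Differentiable ℝ f) {t x y d : ℝ}
    (h : HasDerivAt (fun z => f (t, x, z)) d y) : dY f (t, x, y) = d := by
  have := curve_deriv hf (hasDerivAt_const y t) (hasDerivAt_const y x) (hasDerivAt_id' y)
  simpa using this.unique h

lemma rot_X {f : ℝ × ℝ × ℝ → ℝ} (hf : Differentiable ℝ f) (ε t x y : ℝ) :
    HasDerivAt (fun z => f (rotR ε (t, z, y)))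
      (Real.cos (ε * t) * dX f (rotR ε (t, x, y)) - Real.sin (ε * t) * dY f (rotR ε (t, x, y))) x := by
  have h1 : HasDerivAt (fun z => z * Real.cos (ε * t) + y * Real.sin (ε * t)) (Real.cos (ε * t)) x := by
    simpa using ((hasDerivAt_id' x).mul_const (Real.cos (ε * t))).add_const (y * Real.sin (ε * t))
  have h2 : HasDerivAt (fun z => -z * Real.sin (ε * t) + y * Real.cos (ε * t)) (-Real.sin (ε * t)) x := by
    simpa using ((hasDerivAt_id' x).neg.mul_const (Real.sin (ε * t))).add_const (y * Real.cos (ε * t))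
  refine HasDerivAt.congr_deriv (curve_deriv hf (hasDerivAt_const x t) h1 h2) ?_
  change 0 * dT f (rotR ε (t, x, y)) + Real.cos (ε * t) * dX f (rotR ε (t, x, y)) + -Real.sin (ε * t) * dY f (rotR ε (t, x, y)) = _
  ring

lemma rot_Y {f : ℝ × ℝ × ℝ → ℝ} (hf : Differentiable ℝ f) (ε t x y : ℝ) :
    HasDerivAt (fun z => f (rotR ε (t, x, z)))
      (Real.sin (ε * t) * dX f (rotR ε (t, x, y)) + Real.cos (ε * t) * dY f (rotR ε (t, x, y))) y := by
  have h1 : HasDerivAt (fun z => x * Real.cos (ε * t) + z * Real.sin (ε * t)) (Real.sin (ε * t)) y := by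
    simpa using ((hasDerivAt_id' y).mul_const (Real.sin (ε * t))).const_add (x * Real.cos (ε * t))
  have h2 : HasDerivAt (fun z => -x * Real.sin (ε * t) + z * Real.cos (ε * t)) (Real.cos (ε * t)) y := by
    simpa using ((hasDerivAt_id' y).mul_const (Real.cos (ε * t))).const_add (-x * Real.sin (ε * t))
  refine HasDerivAt.congr_deriv (curve_deriv hf (hasDerivAt_const y t) h1 h2) ?_
  change 0 * dT f (rotR ε (t, x, y)) + Real.sin (ε * t) * dX f (rotR ε (t, x, y)) + Real.cos (ε * t) * dY f (rotR ε (t, x, y)) = _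
  ring

lemma rot_T {f : ℝ × ℝ × ℝ → ℝ} (hf : Differentiable ℝ f) (ε t x y : ℝ) :
    HasDerivAt (fun z => f (rotR ε (z, x, y)))
      (dT f (rotR ε (t, x, y)) + ε * (rotR ε (t, x, y)).2.2 * dX f (rotR ε (t, x, y))
        - ε * (rotR ε (t, x, y)).2.1 * dY f (rotR ε (t, x, y))) t := by
  have h0 : HasDerivAt (fun z : ℝ => ε * z) ε t := by
    simpa using (hasDerivAt_id' t).const_mul ε
  have h1 : HasDerivAt (fun z => x * Real.cos (ε * z) + y * Real.sin (ε * z))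
      (ε * (rotR ε (t, x, y)).2.2) t := by
    refine ((h0.cos.const_mul x).add (h0.sin.const_mul y)).congr_deriv ?_
    simp only [rotR]; ring
  have h2 : HasDerivAt (fun z => -x * Real.sin (ε * z) + y * Real.cos (ε * z))
      (-(ε * (rotR ε (t, x, y)).2.1)) t := by
    refine ((h0.sin.const_mul (-x)).add (h0.cos.const_mul y)).congr_deriv ?_
    simp only [rotR]; ring
  refine HasDerivAt.congr_deriv (curve_deriv hf (hasDerivAt_id' t) h1 h2) ?_
  change 1 * dT f (rotR ε (t, x, y)) + ε * (rotR ε (t, x, y)).2.2 * dX f (rotR ε (t, x, y)) + -(ε * (rotR ε (t, x, y)).2.1) * dY f (rotR ε (t, x, y)) = _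
  ring

/-- Transformed function with a quadratic radial term. -/
def trF (ε k m : ℝ) (f : ℝ × ℝ × ℝ → ℝ) (p : ℝ × ℝ × ℝ) : ℝ :=
  f (rotR ε p) + k / 2 * (p.2.1 ^ 2 + p.2.2 ^ 2) + m

lemma trF_contDiff {f : ℝ × ℝ × ℝ → ℝ} (hf : ContDiff ℝ (⊤ : ℕ∞) f) (ε k m : ℝ) :
    ContDiff ℝ (⊤ : ℕ∞) (trF ε k m f) := by
  have := hf.comp (rotR_contDiff ε)
  unfold trF
  exact (this.add (by fun_prop)).add contDiff_const

lemma dX_trF {f : ℝ × ℝ × ℝ → ℝ} (hf : ContDiff ℝ (⊤ : ℕ∞) f) (ε k m : ℝ) :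
    dX (trF ε k m f) = fun p => Real.cos (ε * p.1) * dX f (rotR ε p)
      - Real.sin (ε * p.1) * dY f (rotR ε p) + k * p.2.1 := by
  funext ⟨t, x, y⟩
  apply dX_eq (smooth_diff (trF_contDiff hf ε k m))
  have h1 := ((((hasDerivAt_id' x).pow 2).add_const (y ^ 2)).const_mul (k / 2))
  refine HasDerivAt.congr_deriv (((rot_X (smooth_diff hf) ε t x y).add h1).add_const m) ?_
  simp; ring

lemma dY_trF {f : ℝ × ℝ × ℝ → ℝ} (hf : ContDiff ℝ (⊤ : ℕ∞) f) (ε k m : ℝ) :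
    dY (trF ε k m f) = fun p => Real.sin (ε * p.1) * dX f (rotR ε p)
      + Real.cos (ε * p.1) * dY f (rotR ε p) + k * p.2.2 := by
  funext ⟨t, x, y⟩
  apply dY_eq (smooth_diff (trF_contDiff hf ε k m))
  have h1 := ((((hasDerivAt_id' y).pow 2).const_add (x ^ 2)).const_mul (k / 2))
  refine HasDerivAt.congr_deriv (((rot_Y (smooth_diff hf) ε t x y).add h1).add_const m) ?_
  simp; ring

lemma dT_trF {f : ℝ × ℝ × ℝ → ℝ} (hf : ContDiff ℝ (⊤ : ℕ∞) f) (ε k m : ℝ) (p : ℝ × ℝ × ℝ) :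
    dT (trF ε k m f) p = dT f (rotR ε p) + ε * (rotR ε p).2.2 * dX f (rotR ε p)
        - ε * (rotR ε p).2.1 * dY f (rotR ε p) := by
  obtain ⟨t, x, y⟩ := p
  apply dT_eq (smooth_diff (trF_contDiff hf ε k m))
  exact ((rot_T (smooth_diff hf) ε t x y).add_const (k / 2 * (x ^ 2 + y ^ 2))).add_const m

lemma vort_trF {f : ℝ × ℝ × ℝ → ℝ} (hf : ContDiff ℝ (⊤ : ℕ∞) f) (ε k m : ℝ) :
    vort (trF ε k m f) = trF ε 0 (2 * k) (vort f) := by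
  funext ⟨t, x, y⟩
  have hx := dX_contDiff hf
  have hy := dY_contDiff hf
  have e1 : dX (dX (trF ε k m f)) (t, x, y) = Real.cos (ε * t) * (Real.cos (ε * t) * dX (dX f) (rotR ε (t, x, y)) - Real.sin (ε * t) * dY (dX f) (rotR ε (t, x, y)))
      - Real.sin (ε * t) * (Real.cos (ε * t) * dX (dY f) (rotR ε (t, x, y)) - Real.sin (ε * t) * dY (dY f) (rotR ε (t, x, y))) + k * 1 := by
    apply dX_eq (smooth_diff (dX_contDiff (trF_contDiff hf ε k m)))
    rw [dX_trF hf]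
    exact ((((rot_X (smooth_diff hx) ε t x y).const_mul (Real.cos (ε * t))).sub
      ((rot_X (smooth_diff hy) ε t x y).const_mul (Real.sin (ε * t)))).add
      ((hasDerivAt_id' x).const_mul k))
  have e2 : dY (dY (trF ε k m f)) (t, x, y) = Real.sin (ε * t) * (Real.sin (ε * t) * dX (dX f) (rotR ε (t, x, y)) + Real.cos (ε * t) * dY (dX f) (rotR ε (t, x, y)))
      + Real.cos (ε * t) * (Real.sin (ε * t) * dX (dY f) (rotR ε (t, x, y)) + Real.cos (ε * t) * dY (dY f) (rotR ε (t, x, y))) + k * 1 := by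
    apply dY_eq (smooth_diff (dY_contDiff (trF_contDiff hf ε k m)))
    rw [dY_trF hf]
    exact ((((rot_Y (smooth_diff hx) ε t x y).const_mul (Real.sin (ε * t))).add
      ((rot_Y (smooth_diff hy) ε t x y).const_mul (Real.cos (ε * t)))).add
      ((hasDerivAt_id' y).const_mul k))
  have cs := Real.sin_sq_add_cos_sq (ε * t)
  change dX (dX (trF ε k m f)) (t, x, y) + dY (dY (trF ε k m f)) (t, x, y) =
    dX (dX f) (rotR ε (t, x, y)) + dY (dY f) (rotR ε (t, x, y)) + 0 / 2 * (x ^ 2 + y ^ 2) + 2 * k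
  rw [e1, e2]
  linear_combination (dX (dX f) (rotR ε (t, x, y)) + dY (dY f) (rotR ε (t, x, y))) * cs


theorem Jt_symmetry_of_rotationally_invariant_parameterization
    (K : ℝ → ℝ) (hK : ContDiff ℝ (⊤ : ℕ∞) K)
    (ψ : ℝ × ℝ × ℝ → ℝ) (h : IsKVortSol K ψ) (ε : ℝ) :
    IsKVortSol K (fun p =>
      ψ (p.1, p.2.1 * Real.cos (ε * p.1) + p.2.2 * Real.sin (ε * p.1),
         -p.2.1 * Real.sin (ε * p.1) + p.2.2 * Real.cos (ε * p.1))
      + ε / 2 * (p.2.1 ^ 2 + p.2.2 ^ 2)) := by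
  obtain ⟨hf, heq⟩ := h
  have key : (fun p : ℝ × ℝ × ℝ =>
      ψ (p.1, p.2.1 * Real.cos (ε * p.1) + p.2.2 * Real.sin (ε * p.1),
         -p.2.1 * Real.sin (ε * p.1) + p.2.2 * Real.cos (ε * p.1))
      + ε / 2 * (p.2.1 ^ 2 + p.2.2 ^ 2)) = trF ε ε 0 ψ := by
    funext p; simp [trF, rotR]
  rw [key]
  refine ⟨trF_contDiff hf _ _ _, fun p => ?_⟩
  have hv := vort_contDiff hf
  have hl := congrFun (vort_trF hv ε 0 (2 * ε)) p
  simp only [vort_trF hf]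
  have hl' : dX (dX (trF ε 0 (2 * ε) (vort ψ))) p + dY (dY (trF ε 0 (2 * ε) (vort ψ))) p
      = dX (dX (vort ψ)) (rotR ε p) + dY (dY (vort ψ)) (rotR ε p) := by
    have : trF ε 0 (2 * 0) (vort (vort ψ)) p = vort (vort ψ) (rotR ε p) := by simp [trF]
    exact hl.trans this
  have cs := Real.sin_sq_add_cos_sq (ε * p.1)
  have hr : (rotR ε p).2.1 ^ 2 + (rotR ε p).2.2 ^ 2 = p.2.1 ^ 2 + p.2.2 ^ 2 := by
    simp only [rotR]
    linear_combination (p.2.1 ^ 2 + p.2.2 ^ 2) * cs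
  have h0 := heq (rotR ε p)
  rw [hr] at h0
  rw [hl', ← h0, dT_trF hv, dX_trF hv, dY_trF hv, dX_trF hf, dY_trF hf]
  have e1 : (rotR ε p).2.1 = p.2.1 * Real.cos (ε * p.1) + p.2.2 * Real.sin (ε * p.1) := rfl
  have e2 : (rotR ε p).2.2 = -p.2.1 * Real.sin (ε * p.1) + p.2.2 * Real.cos (ε * p.1) := rfl
  simp only [e1, e2]
  linear_combination (dX ψ (rotR ε p) * dY (vort ψ) (rotR ε p)
    - dY ψ (rotR ε p) * dX (vort ψ) (rotR ε p)) * cs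
end
end

section
/- Let f¹, f² : ℝ⁵ → ℝ be smooth functions of (t, x, y, ζ₁, ζ₂), let γ¹ : ℝ → ℝ be smooth, and let ψ : ℝ³ → ℝ be a smooth solution of ζ_t + ψ_x ζ_y − ψ_y ζ_x = ∂_x[f¹(t,x,y,ζ_x,ζ_y)] + ∂_y[f²(t,x,y,ζ_x,ζ_y)], where ζ := ψ_xx + ψ_yy and ∂_x, ∂_y differentiate the full composition. Then ψ̃(t,x,y) := ψ(t, x − γ¹(t), y) − γ¹'(t)·y is a smooth solution of the equation from the same class with arbitrary elements f̃^i(t,x,y,ζ₁,ζ₂) := f^i(t, x − γ¹(t), y, ζ₁, ζ₂) for i = 1, 2. -/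
noncomputable section

abbrev V5 := ℝ × ℝ × ℝ × ℝ × ℝ

/-- The full composition (t,x,y) ↦ f(t, x, y, ζ_x(t,x,y), ζ_y(t,x,y)). -/
def fcomp (f : V5 → ℝ) (ψ : ℝ × ℝ × ℝ → ℝ) : ℝ × ℝ × ℝ → ℝ :=
  fun p => f (p.1, p.2.1, p.2.2, dX (vort ψ) p, dY (vort ψ) p)

/-- ψ is a smooth solution of the generalized vorticity equation
ζ_t + ψ_x ζ_y − ψ_y ζ_x = ∂_x[f¹(t,x,y,ζ_x,ζ_y)] + ∂_y[f²(t,x,y,ζ_x,ζ_y)]. -/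
def IsGenVortSol (f1 f2 : V5 → ℝ) (ψ : ℝ × ℝ × ℝ → ℝ) : Prop :=
  ContDiff ℝ (⊤ : ℕ∞) ψ ∧ ∀ p : ℝ × ℝ × ℝ,
    dT (vort ψ) p + dX ψ p * dY (vort ψ) p - dY ψ p * dX (vort ψ) p
      = dX (fcomp f1 ψ) p + dY (fcomp f2 ψ) p

def shS (γ : ℝ → ℝ) (p : ℝ × ℝ × ℝ) : ℝ × ℝ × ℝ := (p.1, p.2.1 - γ p.1, p.2.2)

lemma shS_contDiff {γ : ℝ → ℝ} (hγ : ContDiff ℝ (⊤ : ℕ∞) γ) : ContDiff ℝ (⊤ : ℕ∞) (shS γ) := by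
  unfold shS
  fun_prop

lemma shS_line {γ : ℝ → ℝ} (hγ : ContDiff ℝ (⊤ : ℕ∞) γ) (p v : ℝ × ℝ × ℝ) :
    fderiv ℝ (shS γ) p v = (v.1, v.2.1 - deriv γ p.1 * v.1, v.2.2) := by
  have hd : DifferentiableAt ℝ γ p.1 := (hγ.differentiable (by simp)) p.1
  have h1 : HasFDerivAt (fun p : ℝ × ℝ × ℝ => p.1) (ContinuousLinearMap.fst ℝ ℝ (ℝ × ℝ)) p :=
    hasFDerivAt_fst
  have h2 : HasFDerivAt (fun p : ℝ × ℝ × ℝ => p.2)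
      (ContinuousLinearMap.snd ℝ ℝ (ℝ × ℝ)) p := hasFDerivAt_snd
  have h3 := hd.hasDerivAt.comp_hasFDerivAt p h1
  have h4 : HasFDerivAt (shS γ) _ p := h1.prodMk ((h2.fst.sub h3).prodMk h2.snd)
  rw [h4.fderiv]
  simp

lemma fderiv_shS {γ : ℝ → ℝ} (hγ : ContDiff ℝ (⊤ : ℕ∞) γ) {g : ℝ × ℝ × ℝ → ℝ}
    (hg : Differentiable ℝ g) (p v : ℝ × ℝ × ℝ) :
    fderiv ℝ (fun p => g (shS γ p)) p v
      = fderiv ℝ g (shS γ p) (v.1, v.2.1 - deriv γ p.1 * v.1, v.2.2) := by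
  have := fderiv_comp p (hg (shS γ p)) (((shS_contDiff hγ).differentiable (by simp)) p)
  have e : (fun p => g (shS γ p)) = g ∘ shS γ := rfl
  rw [e, this, ContinuousLinearMap.comp_apply, shS_line hγ]

lemma dX_shS {γ : ℝ → ℝ} (hγ : ContDiff ℝ (⊤ : ℕ∞) γ) {g : ℝ × ℝ × ℝ → ℝ}
    (hg : Differentiable ℝ g) : dX (fun p => g (shS γ p)) = fun p => dX g (shS γ p) := by
  funext p; simp [dX, fderiv_shS hγ hg]

lemma dY_shS {γ : ℝ → ℝ} (hγ : ContDiff ℝ (⊤ : ℕ∞) γ) {g : ℝ × ℝ × ℝ → ℝ}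
    (hg : Differentiable ℝ g) : dY (fun p => g (shS γ p)) = fun p => dY g (shS γ p) := by
  funext p; simp [dY, fderiv_shS hγ hg]

lemma dT_shS {γ : ℝ → ℝ} (hγ : ContDiff ℝ (⊤ : ℕ∞) γ) {g : ℝ × ℝ × ℝ → ℝ}
    (hg : Differentiable ℝ g) (p : ℝ × ℝ × ℝ) : dT (fun p => g (shS γ p)) p
      = dT g (shS γ p) - deriv γ p.1 * dX g (shS γ p) := by
  have e : ((1, 0 - deriv γ p.1 * 1, 0) : ℝ × ℝ × ℝ)
      = (1, 0, 0) - deriv γ p.1 • (0, 1, 0) := by simp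
  simp only [dT, dX, fderiv_shS hγ hg]
  rw [e, map_sub, map_smul, smul_eq_mul]

lemma smooth_dir {g : ℝ × ℝ × ℝ → ℝ} (hg : ContDiff ℝ (⊤ : ℕ∞) g) (v : ℝ × ℝ × ℝ) :
    ContDiff ℝ (⊤ : ℕ∞) (fun p => fderiv ℝ g p v) :=
  (hg.fderiv_right (m := (⊤ : ℕ∞)) (by simp)).clm_apply contDiff_const

lemma smooth_dX {g : ℝ × ℝ × ℝ → ℝ} (hg : ContDiff ℝ (⊤ : ℕ∞) g) :
    ContDiff ℝ (⊤ : ℕ∞) (dX g) := smooth_dir hg _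

lemma smooth_dY {g : ℝ × ℝ × ℝ → ℝ} (hg : ContDiff ℝ (⊤ : ℕ∞) g) :
    ContDiff ℝ (⊤ : ℕ∞) (dY g) := smooth_dir hg _

lemma smooth_vort {g : ℝ × ℝ × ℝ → ℝ} (hg : ContDiff ℝ (⊤ : ℕ∞) g) :
    ContDiff ℝ (⊤ : ℕ∞) (vort g) :=
  (smooth_dX (smooth_dX hg)).add (smooth_dY (smooth_dY hg))

lemma smooth_fcomp {f : V5 → ℝ} (hf : ContDiff ℝ (⊤ : ℕ∞) f) {g : ℝ × ℝ × ℝ → ℝ}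
    (hg : ContDiff ℝ (⊤ : ℕ∞) g) : ContDiff ℝ (⊤ : ℕ∞) (fcomp f g) := by
  have h1 := smooth_dX (smooth_vort hg)
  have h2 := smooth_dY (smooth_vort hg)
  unfold fcomp
  fun_prop

lemma smooth_diff_s12 {g : ℝ × ℝ × ℝ → ℝ} (hg : ContDiff ℝ (⊤ : ℕ∞) g) : Differentiable ℝ g :=
  hg.differentiable (by simp)

lemma fderiv_corr {c : ℝ → ℝ} (hc : ContDiff ℝ (⊤ : ℕ∞) c) (p v : ℝ × ℝ × ℝ) :
    fderiv ℝ (fun p : ℝ × ℝ × ℝ => c p.1 * p.2.2) p v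
      = c p.1 * v.2.2 + p.2.2 * (deriv c p.1 * v.1) := by
  have hd : DifferentiableAt ℝ c p.1 := (hc.differentiable (by simp)) p.1
  have h1 : HasFDerivAt (fun p : ℝ × ℝ × ℝ => p.1) (ContinuousLinearMap.fst ℝ ℝ (ℝ × ℝ)) p :=
    hasFDerivAt_fst
  have h2 : HasFDerivAt (fun p : ℝ × ℝ × ℝ => p.2)
      (ContinuousLinearMap.snd ℝ ℝ (ℝ × ℝ)) p := hasFDerivAt_snd
  have h3 := hd.hasDerivAt.comp_hasFDerivAt p h1
  have h4 : HasFDerivAt (fun p : ℝ × ℝ × ℝ => c p.1 * p.2.2) _ p := h3.mul h2.snd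
  rw [h4.fderiv]
  simp

theorem equivalence_transformation_X_gamma
    (f1 f2 : V5 → ℝ) (hf1 : ContDiff ℝ (⊤ : ℕ∞) f1) (hf2 : ContDiff ℝ (⊤ : ℕ∞) f2)
    (γ1 : ℝ → ℝ) (hγ1 : ContDiff ℝ (⊤ : ℕ∞) γ1)
    (ψ : ℝ × ℝ × ℝ → ℝ) (h : IsGenVortSol f1 f2 ψ) :
    IsGenVortSol
      (fun q => f1 (q.1, q.2.1 - γ1 q.1, q.2.2.1, q.2.2.2.1, q.2.2.2.2))
      (fun q => f2 (q.1, q.2.1 - γ1 q.1, q.2.2.1, q.2.2.2.1, q.2.2.2.2))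
      (fun p => ψ (p.1, p.2.1 - γ1 p.1, p.2.2) - deriv γ1 p.1 * p.2.2) := by
  obtain ⟨hψ, heq⟩ := h
  have hc : ContDiff ℝ (⊤ : ℕ∞) (deriv γ1) := by
    have := hγ1.iterate_deriv 1
    simpa using this
  have hS := shS_contDiff hγ1
  have hψS : ContDiff ℝ (⊤ : ℕ∞) (fun p => ψ (shS γ1 p)) := hψ.comp hS
  have hcor : ContDiff ℝ (⊤ : ℕ∞) (fun p : ℝ × ℝ × ℝ => deriv γ1 p.1 * p.2.2) := by fun_prop
  change IsGenVortSol _ _ (fun p => ψ (shS γ1 p) - deriv γ1 p.1 * p.2.2)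
  set φ : ℝ × ℝ × ℝ → ℝ := fun p => ψ (shS γ1 p) - deriv γ1 p.1 * p.2.2 with hφ
  have hfd : ∀ p v, fderiv ℝ φ p v = fderiv ℝ (fun p => ψ (shS γ1 p)) p v
      - (deriv γ1 p.1 * v.2.2 + p.2.2 * (deriv (deriv γ1) p.1 * v.1)) := by
    intro p v
    rw [← fderiv_corr hc, hφ, fderiv_fun_sub (smooth_diff_s12 hψS p) (smooth_diff_s12 hcor p)]
    rfl
  have hX : dX φ = fun p => dX ψ (shS γ1 p) := by
    rw [← dX_shS hγ1 (smooth_diff_s12 hψ)]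
    funext p; simp [dX, hfd]
  have hY : dY φ = fun p => dY ψ (shS γ1 p) - deriv γ1 p.1 := by
    funext p
    have := congrFun (dY_shS hγ1 (smooth_diff_s12 hψ)) p
    rw [← this]
    simp [dY, hfd]
  have hYY : dY (dY φ) = fun p => dY (dY ψ) (shS γ1 p) := by
    rw [← dY_shS hγ1 (smooth_diff_s12 (smooth_dY hψ)), hY]
    funext p
    have hd : DifferentiableAt ℝ (deriv γ1) p.1 := (hc.differentiable (by simp)) p.1
    have h1 : HasFDerivAt (fun p : ℝ × ℝ × ℝ => p.1)
      (ContinuousLinearMap.fst ℝ ℝ (ℝ × ℝ)) p := hasFDerivAt_fst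
    have h3 : HasFDerivAt (fun p : ℝ × ℝ × ℝ => deriv γ1 p.1) _ p :=
      hd.hasDerivAt.comp_hasFDerivAt p h1
    have h4 : DifferentiableAt ℝ (fun p => dY ψ (shS γ1 p)) p :=
      smooth_diff_s12 ((smooth_dY hψ).comp hS) p
    unfold dY at h4 ⊢
    rw [(h4.hasFDerivAt.fun_sub h3).fderiv]
    simp
  have hV : vort φ = fun p => vort ψ (shS γ1 p) := by
    funext p
    simp only [vort]
    rw [hYY, hX, dX_shS hγ1 (smooth_diff_s12 (smooth_dX hψ))]
  have hζ := smooth_diff_s12 (smooth_vort hψ)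
  have hF : ∀ f : V5 → ℝ,
      fcomp (fun q => f (q.1, q.2.1 - γ1 q.1, q.2.2.1, q.2.2.2.1, q.2.2.2.2)) φ
        = fun p => fcomp f ψ (shS γ1 p) := by
    intro f
    funext p
    simp only [fcomp]
    rw [hV, dX_shS hγ1 hζ, dY_shS hγ1 hζ]
    rfl
  refine ⟨hψS.sub hcor, fun p => ?_⟩
  rw [hF, hF, hV, dT_shS hγ1 hζ, dX_shS hγ1 hζ, dY_shS hγ1 hζ, hX, hY,
    dX_shS hγ1 (smooth_diff_s12 (smooth_fcomp hf1 hψ)), dY_shS hγ1 (smooth_diff_s12 (smooth_fcomp hf2 hψ))]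
  have := heq (shS γ1 p)
  simp only []
  linarith
end
end

section
/- Let f¹, f² : ℝ³ → ℝ be arbitrary smooth functions of (t, ζ₁, ζ₂), let γ¹, γ², χ : ℝ → ℝ be arbitrary smooth functions, and let ψ : ℝ³ → ℝ be a smooth solution of ζ_t + ψ_x ζ_y − ψ_y ζ_x = ∂_x[f¹(t,ζ_x,ζ_y)] + ∂_y[f²(t,ζ_x,ζ_y)], where ζ := ψ_xx + ψ_yy and ∂_x, ∂_y differentiate the full composition. Then ψ̃(t,x,y) := ψ(t, x − γ¹(t), y − γ²(t)) − γ¹'(t)·y + γ²'(t)·x + χ(t) is also a smooth solution of the same equation. -/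
/-!
Statement 13: the kernel symmetries X(γ¹), Y(γ²), Z(χ) of the class of spatially
independent generalized vorticity equations
ζ_t + {ψ,ζ} = ∂_x[f¹(t,ζ_x,ζ_y)] + ∂_y[f²(t,ζ_x,ζ_y)].
-/

noncomputable section

/-- The full composition (t,x,y) ↦ f(t, ζ_x(t,x,y), ζ_y(t,x,y)). -/
def fcomp3 (f : ℝ × ℝ × ℝ → ℝ) (ψ : ℝ × ℝ × ℝ → ℝ) : ℝ × ℝ × ℝ → ℝ :=
  fun p => f (p.1, dX (vort ψ) p, dY (vort ψ) p)

/-- ψ is a smooth solution of the spatially independent generalized vorticity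
equation ζ_t + ψ_x ζ_y − ψ_y ζ_x = ∂_x[f¹(t,ζ_x,ζ_y)] + ∂_y[f²(t,ζ_x,ζ_y)]. -/
def IsSpIndGenVortSol (f1 f2 : ℝ × ℝ × ℝ → ℝ) (ψ : ℝ × ℝ × ℝ → ℝ) : Prop :=
  ContDiff ℝ (⊤ : ℕ∞) ψ ∧ ∀ p : ℝ × ℝ × ℝ,
    dT (vort ψ) p + dX ψ p * dY (vort ψ) p - dY ψ p * dX (vort ψ) p
      = dX (fcomp3 f1 ψ) p + dY (fcomp3 f2 ψ) p

/-- the moving-frame map -/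
def gmap (γ1 γ2 : ℝ → ℝ) (p : ℝ × ℝ × ℝ) : ℝ × ℝ × ℝ :=
  (p.1, p.2.1 - γ1 p.1, p.2.2 - γ2 p.1)

lemma hasFDerivAt_time (a : ℝ → ℝ) (ha : Differentiable ℝ a) (p : ℝ × ℝ × ℝ) :
    HasFDerivAt (fun p : ℝ × ℝ × ℝ => a p.1)
      (deriv a p.1 • ContinuousLinearMap.fst ℝ ℝ (ℝ × ℝ)) p :=
  (ha p.1).hasDerivAt.comp_hasFDerivAt p hasFDerivAt_fst

lemma hasFDerivAt_x (p : ℝ × ℝ × ℝ) :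
    HasFDerivAt (fun p : ℝ × ℝ × ℝ => p.2.1)
      ((ContinuousLinearMap.fst ℝ ℝ ℝ).comp (ContinuousLinearMap.snd ℝ ℝ (ℝ × ℝ))) p :=
  hasFDerivAt_fst.comp p hasFDerivAt_snd

lemma hasFDerivAt_y (p : ℝ × ℝ × ℝ) :
    HasFDerivAt (fun p : ℝ × ℝ × ℝ => p.2.2)
      ((ContinuousLinearMap.snd ℝ ℝ ℝ).comp (ContinuousLinearMap.snd ℝ ℝ (ℝ × ℝ))) p :=
  hasFDerivAt_snd.comp p hasFDerivAt_snd

lemma fderiv_gen (γ1 γ2 a b c : ℝ → ℝ) (h1 : Differentiable ℝ γ1) (h2 : Differentiable ℝ γ2)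
    (ha : Differentiable ℝ a) (hb : Differentiable ℝ b) (hc : Differentiable ℝ c)
    (F : ℝ × ℝ × ℝ → ℝ) (hF : Differentiable ℝ F) (p v : ℝ × ℝ × ℝ) :
    fderiv ℝ (fun p => F (gmap γ1 γ2 p) - a p.1 * p.2.2 + b p.1 * p.2.1 + c p.1) p v
      = fderiv ℝ F (gmap γ1 γ2 p)
          (v.1, v.2.1 - deriv γ1 p.1 * v.1, v.2.2 - deriv γ2 p.1 * v.1)
        - (a p.1 * v.2.2 + p.2.2 * (deriv a p.1 * v.1))
        + (b p.1 * v.2.1 + p.2.1 * (deriv b p.1 * v.1)) + deriv c p.1 * v.1 := by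
  have hg : HasFDerivAt (gmap γ1 γ2) _ p :=
    (hasFDerivAt_fst (𝕜 := ℝ) (p := p)).prodMk
      (((hasFDerivAt_x p).sub (hasFDerivAt_time γ1 h1 p)).prodMk
        ((hasFDerivAt_y p).sub (hasFDerivAt_time γ2 h2 p)))
  have hFg := (hF (gmap γ1 γ2 p)).hasFDerivAt.comp p hg
  have hA := (hasFDerivAt_time a ha p).mul (hasFDerivAt_y p)
  have hB := (hasFDerivAt_time b hb p).mul (hasFDerivAt_x p)
  have hall := ((hFg.sub hA).add hB).add (hasFDerivAt_time c hc p)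
  have e := hall.fderiv
  have e2 := congrArg (fun L => L v) e
  refine Eq.trans e2 ?_
  simp

lemma fderiv_comp_g (γ1 γ2 c : ℝ → ℝ) (h1 : Differentiable ℝ γ1) (h2 : Differentiable ℝ γ2)
    (hc : Differentiable ℝ c)
    (F : ℝ × ℝ × ℝ → ℝ) (hF : Differentiable ℝ F) (p v : ℝ × ℝ × ℝ) :
    fderiv ℝ (fun p => F (gmap γ1 γ2 p) + c p.1) p v
      = fderiv ℝ F (gmap γ1 γ2 p)
          (v.1, v.2.1 - deriv γ1 p.1 * v.1, v.2.2 - deriv γ2 p.1 * v.1)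
        + deriv c p.1 * v.1 := by
  have := fderiv_gen γ1 γ2 (fun _ => 0) (fun _ => 0) c h1 h2 (by fun_prop) (by fun_prop) hc F hF p v
  simpa using this

lemma fderiv_comp_g0 (γ1 γ2 : ℝ → ℝ) (h1 : Differentiable ℝ γ1) (h2 : Differentiable ℝ γ2)
    (F : ℝ × ℝ × ℝ → ℝ) (hF : Differentiable ℝ F) (p v : ℝ × ℝ × ℝ) :
    fderiv ℝ (fun p => F (gmap γ1 γ2 p)) p v
      = fderiv ℝ F (gmap γ1 γ2 p)
          (v.1, v.2.1 - deriv γ1 p.1 * v.1, v.2.2 - deriv γ2 p.1 * v.1) := by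
  have := fderiv_comp_g γ1 γ2 (fun _ => 0) h1 h2 (by fun_prop) F hF p v
  simpa using this

lemma contDiff_dir (F : ℝ × ℝ × ℝ → ℝ) (hF : ContDiff ℝ (⊤ : ℕ∞) F) (v : ℝ × ℝ × ℝ) :
    ContDiff ℝ (⊤ : ℕ∞) (fun p => fderiv ℝ F p v) :=
  (hF.fderiv_right (m := (⊤ : ℕ∞)) (by simp)).clm_apply contDiff_const

lemma contDiff_dX {F : ℝ × ℝ × ℝ → ℝ} (hF : ContDiff ℝ (⊤ : ℕ∞) F) :
    ContDiff ℝ (⊤ : ℕ∞) (dX F) := contDiff_dir F hF _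

lemma contDiff_dY {F : ℝ × ℝ × ℝ → ℝ} (hF : ContDiff ℝ (⊤ : ℕ∞) F) :
    ContDiff ℝ (⊤ : ℕ∞) (dY F) := contDiff_dir F hF _

lemma contDiff_vort {F : ℝ × ℝ × ℝ → ℝ} (hF : ContDiff ℝ (⊤ : ℕ∞) F) :
    ContDiff ℝ (⊤ : ℕ∞) (vort F) :=
  (contDiff_dX (contDiff_dX hF)).add (contDiff_dY (contDiff_dY hF))

lemma contDiff_fcomp3 {f F : ℝ × ℝ × ℝ → ℝ} (hf : ContDiff ℝ (⊤ : ℕ∞) f)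
    (hF : ContDiff ℝ (⊤ : ℕ∞) F) : ContDiff ℝ (⊤ : ℕ∞) (fcomp3 f F) :=
  hf.comp (contDiff_fst.prodMk
    ((contDiff_dX (contDiff_vort hF)).prodMk (contDiff_dY (contDiff_vort hF))))

theorem kernel_symmetries_of_spatially_independent_class
    (f1 f2 : ℝ × ℝ × ℝ → ℝ) (hf1 : ContDiff ℝ (⊤ : ℕ∞) f1) (hf2 : ContDiff ℝ (⊤ : ℕ∞) f2)
    (γ1 γ2 χ : ℝ → ℝ)
    (hγ1 : ContDiff ℝ (⊤ : ℕ∞) γ1) (hγ2 : ContDiff ℝ (⊤ : ℕ∞) γ2) (hχ : ContDiff ℝ (⊤ : ℕ∞) χ)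
    (ψ : ℝ × ℝ × ℝ → ℝ) (h : IsSpIndGenVortSol f1 f2 ψ) :
    IsSpIndGenVortSol f1 f2
      (fun p => ψ (p.1, p.2.1 - γ1 p.1, p.2.2 - γ2 p.1)
        - deriv γ1 p.1 * p.2.2 + deriv γ2 p.1 * p.2.1 + χ p.1) := by
  obtain ⟨hψ, heq⟩ := h
  have n0 : ((⊤ : ℕ∞) : WithTop ℕ∞) ≠ 0 := by simp
  have hd1 : ContDiff ℝ (⊤ : ℕ∞) (deriv γ1) := (contDiff_infty_iff_deriv.1 hγ1).2
  have hd2 : ContDiff ℝ (⊤ : ℕ∞) (deriv γ2) := (contDiff_infty_iff_deriv.1 hγ2).2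
  have D1 := hγ1.differentiable n0
  have D2 := hγ2.differentiable n0
  have E1 := hd1.differentiable n0
  have E2 := hd2.differentiable n0
  refine ⟨by fun_prop, ?_⟩
  set Ψ : ℝ × ℝ × ℝ → ℝ := fun p => ψ (p.1, p.2.1 - γ1 p.1, p.2.2 - γ2 p.1)
        - deriv γ1 p.1 * p.2.2 + deriv γ2 p.1 * p.2.1 + χ p.1 with hΨ
  have gen := fderiv_gen γ1 γ2 _ _ χ D1 D2 E1 E2 (hχ.differentiable n0) ψ (hψ.differentiable n0)
  have hX : dX Ψ = fun p => dX ψ (gmap γ1 γ2 p) + deriv γ2 p.1 := by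
    funext p
    refine (gen p (0, 1, 0)).trans ?_
    simp [dX]
  have hY : dY Ψ = fun p => dY ψ (gmap γ1 γ2 p) + (fun t => - deriv γ1 t) p.1 := by
    funext p
    refine (gen p (0, 0, 1)).trans ?_
    simp [dY, sub_eq_add_neg]
  have hv : vort Ψ = fun p => vort ψ (gmap γ1 γ2 p) := by
    funext p
    have a := fderiv_comp_g γ1 γ2 _ D1 D2 E2 (dX ψ)
      ((contDiff_dX hψ).differentiable n0) p (0, 1, 0)
    have b := fderiv_comp_g γ1 γ2 _ D1 D2 E1.neg (dY ψ)
      ((contDiff_dY hψ).differentiable n0) p (0, 0, 1)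
    have a' : dX (dX Ψ) p = dX (dX ψ) (gmap γ1 γ2 p) := by
      rw [hX]; refine a.trans ?_; simp [dX]
    have b' : dY (dY Ψ) p = dY (dY ψ) (gmap γ1 γ2 p) := by
      rw [hY]; refine b.trans ?_; simp [dY]
    simp only [vort, a', b']
  have compX : ∀ F : ℝ × ℝ × ℝ → ℝ, ContDiff ℝ (⊤ : ℕ∞) F → ∀ p,
      dX (fun p => F (gmap γ1 γ2 p)) p = dX F (gmap γ1 γ2 p) := by
    intro F hF p
    refine (fderiv_comp_g0 γ1 γ2 D1 D2 F (hF.differentiable n0) p (0, 1, 0)).trans ?_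
    simp [dX]
  have compY : ∀ F : ℝ × ℝ × ℝ → ℝ, ContDiff ℝ (⊤ : ℕ∞) F → ∀ p,
      dY (fun p => F (gmap γ1 γ2 p)) p = dY F (gmap γ1 γ2 p) := by
    intro F hF p
    refine (fderiv_comp_g0 γ1 γ2 D1 D2 F (hF.differentiable n0) p (0, 0, 1)).trans ?_
    simp [dY]
  have compT : ∀ F : ℝ × ℝ × ℝ → ℝ, ContDiff ℝ (⊤ : ℕ∞) F → ∀ p,
      dT (fun p => F (gmap γ1 γ2 p)) p = dT F (gmap γ1 γ2 p)
        - deriv γ1 p.1 * dX F (gmap γ1 γ2 p) - deriv γ2 p.1 * dY F (gmap γ1 γ2 p) := by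
    intro F hF p
    refine (fderiv_comp_g0 γ1 γ2 D1 D2 F (hF.differentiable n0) p (1, 0, 0)).trans ?_
    have : ((1 : ℝ), (0 : ℝ) - deriv γ1 p.1 * 1, (0 : ℝ) - deriv γ2 p.1 * 1)
        = ((1 : ℝ), (0 : ℝ), (0 : ℝ)) - deriv γ1 p.1 • ((0 : ℝ), (1 : ℝ), (0 : ℝ))
          - deriv γ2 p.1 • ((0 : ℝ), (0 : ℝ), (1 : ℝ)) := by
      simp
    simp only [this, map_sub, map_smul, smul_eq_mul, dT, dX, dY]
  have hV := contDiff_vort hψ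
  have hfc : ∀ f, fcomp3 f Ψ = fun p => fcomp3 f ψ (gmap γ1 γ2 p) := by
    intro f
    funext p
    simp only [fcomp3, hv, compX _ hV, compY _ hV]
    rfl
  intro p
  have key := heq (gmap γ1 γ2 p)
  rw [hfc, hfc, hv, compX _ hV, compY _ hV, compT _ hV, compX _ (contDiff_fcomp3 hf1 hψ),
    compY _ (contDiff_fcomp3 hf2 hψ), hX, hY, ← key]
  ring
end
end
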